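/- The number of intervals in the Tamari lattice on binary trees with n nodes equals 2(4n+1)! / ((n+1)!(3n+2)!). -/

import Mathlib

/-- Unlabelled binary trees. -/
inductive Tree0 where
  | leaf : Tree0
  | node : Tree0 → Tree0 → Tree0
deriving DecidableEq

namespace Tree0

/-- Number of nodes. -/
def size : Tree0 → ℕ
  | leaf => 0
  | node l r => size l + size r + 1

/-- One right rotation somewhere in the tree: `y(x(A,B),C) ↦ x(A,y(B,C))`. -/
inductive Rot : Tree0 → Tree0 → Prop
  | root (A B C : Tree0) : Rot (node (node A B) C) (node A (node B C))
  | left {l l' : Tree0} (r : Tree0) : Rot l l' → Rot (node l r) (node l' r)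
  | right (l : Tree0) {r r' : Tree0} : Rot r r' → Rot (node l r) (node l r')

/-- The Tamari order: transitive closure of right rotation. -/
def tamariLE : Tree0 → Tree0 → Prop := Relation.ReflTransGen Rot

end Tree0

/-! The trees below `node l r` in the Tamari order arise from a tree `a ≤ l` and a tree `c ≤ r` by
inserting on the left branch of `c` a new node with left subtree `a`. If the left branch of the
lower tree of an interval is marked by `x`, this turns into the catalytic equation
`(x - 1) (F - x) = x t F (F - F(t; 1))`, which determines `F(t; x)`. For `t = z (1 - z) ^ 3` its
solution is `x c (1 - z c) / (1 - z)` with `c = Cat(x z (1 - z))` and `Cat` the Catalan series, so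
that `F(t; 1) = (1 - 2 z) / (1 - z) ^ 3`. Comparing coefficients of `z ^ (k + 2)`, Chapoton's
numbers are the coefficients of this series in powers of `t` because a finite difference of order
`k + 2` annihilates the falling factorial of length `k` of `4 n + 1`, a polynomial in `n` of
degree `k`. -/

namespace Tree0

open Finset Relation

section Insertion

/-- Number of nodes on the left branch. -/
def leftDepth : Tree0 → ℕ
  | leaf => 0
  | node l _ => leftDepth l + 1

/-- `insertAt s a c` subdivides the left branch of `c` at depth `s` by a new node: its left subtree
is `a` and its right subtree is the part of `c` below the subdivided edge. It is meant for
`s ≤ leftDepth c`. -/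
def insertAt : ℕ → Tree0 → Tree0 → Tree0
  | 0, a, c => node a c
  | _ + 1, a, leaf => node a leaf
  | s + 1, a, node l r => node (insertAt s a l) r

theorem size_insertAt (s : ℕ) (a c : Tree0) : (insertAt s a c).size = a.size + c.size + 1 := by
  induction s generalizing c with
  | zero => rfl
  | succ s ih =>
    cases c with
    | leaf => rfl
    | node l r => simp only [insertAt, size, ih]; omega

theorem leftDepth_insertAt {s : ℕ} {c : Tree0} (hs : s ≤ leftDepth c) (a : Tree0) :
    leftDepth (insertAt s a c) = leftDepth a + s + 1 := by
  induction s generalizing c with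
  | zero => rfl
  | succ s ih =>
    cases c with
    | leaf => simp [leftDepth] at hs
    | node l r =>
      simp only [leftDepth, Nat.add_le_add_iff_right] at hs
      simp only [insertAt, leftDepth, ih hs]
      omega

theorem insertAt_inj {s s' : ℕ} {a a' c c' : Tree0} (hs : s ≤ leftDepth c)
    (hs' : s' ≤ leftDepth c') (ha : a.size = a'.size) :
    insertAt s a c = insertAt s' a' c' ↔ s = s' ∧ a = a' ∧ c = c' := by
  refine ⟨fun h => ?_, by rintro ⟨rfl, rfl, rfl⟩; rfl⟩
  induction s generalizing s' c c' with
  | zero =>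
    match s', c', hs' with
    | 0, _, _ => simpa [insertAt] using h
    | s' + 1, node l' r', _ =>
      have hl := congrArg size (node.inj h).1
      rw [size_insertAt] at hl
      omega
  | succ s ih =>
    match c, s', c', hs, hs' with
    | node l r, 0, _, _, _ =>
      have hl := congrArg size (node.inj h).1
      rw [size_insertAt] at hl
      omega
    | node l r, s' + 1, node l' r', hs, hs' =>
      obtain ⟨hl, rfl⟩ := node.inj h
      obtain ⟨rfl, rfl, rfl⟩ := ih (Nat.le_of_succ_le_succ hs) (Nat.le_of_succ_le_succ hs') hl
      exact ⟨rfl, rfl, rfl⟩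

end Insertion

section TamariOrder

theorem Rot.size_eq {S T : Tree0} (h : Rot S T) : S.size = T.size := by
  induction h with
  | root A B C => simp only [size]; omega
  | left r _ ih => simp only [size, ih]
  | right l _ ih => simp only [size, ih]

theorem tamariLE.size_eq {S T : Tree0} (h : tamariLE S T) : S.size = T.size := by
  induction h with
  | refl => rfl
  | tail _ hrot ih => exact ih.trans hrot.size_eq

theorem tamariLE.node_left {l l' : Tree0} (h : tamariLE l l') (r : Tree0) :
    tamariLE (node l r) (node l' r) :=
  ReflTransGen.lift (node · r) (fun _ _ => Rot.left r) _ _ h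

theorem tamariLE.node_right {r r' : Tree0} (l : Tree0) (h : tamariLE r r') :
    tamariLE (node l r) (node l r') :=
  ReflTransGen.lift (node l ·) (fun _ _ => Rot.right l) _ _ h

theorem insertAt_tamariLE_node (s : ℕ) (a c : Tree0) : tamariLE (insertAt s a c) (node a c) := by
  induction s generalizing c with
  | zero => exact .refl
  | succ s ih =>
    cases c with
    | leaf => exact .refl
    | node l r => exact ((ih l).node_left r).tail (.root a l r)

theorem Rot.exists_insertAt {T a c : Tree0} {s : ℕ} (hs : s ≤ leftDepth c)
    (h : Rot T (insertAt s a c)) :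
    ∃ s' a' c', s' ≤ leftDepth c' ∧ T = insertAt s' a' c' ∧ tamariLE a' a ∧ tamariLE c' c := by
  induction s generalizing T c with
  | zero =>
    cases h with
    | root _ B C => exact ⟨1, a, node B C, by simp [leftDepth], rfl, .refl, .refl⟩
    | left _ h => exact ⟨0, _, c, Nat.zero_le _, rfl, .single h, .refl⟩
    | right _ h => exact ⟨0, a, _, Nat.zero_le _, rfl, .refl, .single h⟩
  | succ s ih =>
    cases c with
    | leaf => simp [leftDepth] at hs
    | node l r =>
      have hsl : s ≤ leftDepth l := Nat.le_of_succ_le_succ hs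
      cases h with
      | root _ B C =>
        exact ⟨s + 2, a, node (node l B) C, Nat.succ_le_succ hs, rfl, .refl, .single (.root l B C)⟩
      | left _ h =>
        obtain ⟨s', a', l', hs', rfl, ha, hl⟩ := ih hsl h
        exact ⟨s' + 1, a', node l' r, Nat.succ_le_succ hs', rfl, ha, hl.node_left r⟩
      | @right _ r' _ h => exact ⟨s + 1, a, node l r', hs, rfl, .refl, .single (.right l h)⟩

theorem tamariLE_node_iff {T l r : Tree0} : tamariLE T (node l r) ↔
    ∃ s a c, s ≤ leftDepth c ∧ T = insertAt s a c ∧ tamariLE a l ∧ tamariLE c r := by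
  constructor
  · intro h
    induction h using ReflTransGen.head_induction_on with
    | refl => exact ⟨0, l, r, Nat.zero_le _, rfl, .refl, .refl⟩
    | head hrot _ ih =>
      obtain ⟨s, a, c, hs, rfl, ha, hc⟩ := ih
      obtain ⟨s', a', c', hs', rfl, ha', hc'⟩ := hrot.exists_insertAt hs
      exact ⟨s', a', c', hs', rfl, ha'.trans ha, hc'.trans hc⟩
  · rintro ⟨s, a, c, -, rfl, ha, hc⟩
    exact ((insertAt_tamariLE_node s a c).trans (ha.node_left c)).trans (hc.node_right l)

theorem tamariLE_leaf_iff {T : Tree0} : tamariLE T leaf ↔ T = leaf := by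
  refine ⟨fun h => ?_, by rintro rfl; exact .refl⟩
  cases T with
  | leaf => rfl
  | node l r => simpa [size] using h.size_eq

end TamariOrder

section Enumeration

theorem finite_setOf_size_le (n : ℕ) : {T : Tree0 | T.size ≤ n}.Finite := by
  induction n with
  | zero =>
    refine (Set.finite_singleton leaf).subset fun T hT => ?_
    cases T with
    | leaf => rfl
    | node l r => simp [size] at hT
  | succ n ih =>
    refine ((Set.finite_singleton leaf).union (ih.image2 node ih)).subset fun T hT => ?_
    cases T with
    | leaf => exact .inl rfl
    | node l r =>
      have hsize : l.size + r.size + 1 ≤ n + 1 := hT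
      exact .inr ⟨l, show l.size ≤ n by omega, r, show r.size ≤ n by omega, rfl⟩

/-- The binary trees with `n` nodes. -/
noncomputable def treesOfSize (n : ℕ) : Finset Tree0 :=
  ((finite_setOf_size_le n).subset fun _ => le_of_eq : {T : Tree0 | T.size = n}.Finite).toFinset

@[simp]
theorem mem_treesOfSize {n : ℕ} {T : Tree0} : T ∈ treesOfSize n ↔ T.size = n := by
  simp [treesOfSize]

theorem treesOfSize_zero : treesOfSize 0 = {leaf} := by
  ext T
  cases T <;> simp [size]

theorem sum_treesOfSize_succ {M : Type*} [AddCommMonoid M] (f : Tree0 → M) (n : ℕ) :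
    ∑ T ∈ treesOfSize (n + 1), f T =
      ∑ ij ∈ antidiagonal n, ∑ l ∈ treesOfSize ij.1, ∑ r ∈ treesOfSize ij.2, f (node l r) := by
  simp_rw [sum_sigma']
  symm
  refine sum_bij (fun z _ => node z.2.1 z.2.2) ?_ ?_ ?_ (fun _ _ => rfl)
  · rintro ⟨⟨i, j⟩, l, r⟩ hz
    simp only [mem_sigma, HasAntidiagonal.mem_antidiagonal, mem_treesOfSize] at hz
    simp only [mem_treesOfSize, size]
    omega
  · rintro ⟨⟨i, j⟩, l, r⟩ hz ⟨⟨i', j'⟩, l', r'⟩ hz' h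
    simp only [mem_sigma, mem_treesOfSize] at hz hz'
    obtain ⟨-, rfl, rfl⟩ := hz
    obtain ⟨-, rfl, rfl⟩ := hz'
    obtain ⟨rfl, rfl⟩ := node.inj h
    rfl
  · intro T hT
    cases T with
    | leaf => simp [size] at hT
    | node l r => exact ⟨⟨(l.size, r.size), l, r⟩, by simpa [size] using hT, rfl⟩

/-- The principal ideal generated by `T` in the Tamari order. -/
noncomputable def lowerTrees (T : Tree0) : Finset Tree0 :=
  ((finite_setOf_size_le T.size).subset fun _ hS => hS.size_eq.le :
    {S | tamariLE S T}.Finite).toFinset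

@[simp]
theorem mem_lowerTrees {S T : Tree0} : S ∈ lowerTrees T ↔ tamariLE S T := by
  simp [lowerTrees]

theorem ncard_intervals (n : ℕ) :
    {p : Tree0 × Tree0 | p.1.size = n ∧ p.2.size = n ∧ tamariLE p.1 p.2}.ncard =
      ∑ T ∈ treesOfSize n, #(lowerTrees T) := by
  have himage : {p : Tree0 × Tree0 | p.1.size = n ∧ p.2.size = n ∧ tamariLE p.1 p.2} =
      (fun z : Σ _ : Tree0, Tree0 => (z.2, z.1)) '' ((treesOfSize n).sigma lowerTrees) := by
    ext ⟨S, T⟩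
    simp only [Set.mem_ofPred_eq, Set.mem_image, mem_coe, mem_sigma, mem_treesOfSize,
      mem_lowerTrees, Prod.mk.injEq, Sigma.exists]
    constructor
    · rintro ⟨-, hT, hle⟩
      exact ⟨T, S, ⟨hT, hle⟩, rfl, rfl⟩
    · rintro ⟨T, S, ⟨hT, hle⟩, rfl, rfl⟩
      exact ⟨hle.size_eq.trans hT, hT, hle⟩
  have hinj : Function.Injective fun z : Σ _ : Tree0, Tree0 => (z.2, z.1) := by
    rintro ⟨T, S⟩ ⟨T', S'⟩ h
    obtain ⟨rfl, rfl⟩ := Prod.mk.inj h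
    rfl
  rw [himage, Set.ncard_image_of_injective _ hinj, Set.ncard_coe_finset, card_sigma]

end Enumeration

section TamariPolynomial

open Polynomial

/-- The Tamari polynomial of `T`: the trees below `T`, counted by the length of their left branch
(its number of edges, one more than its number of nodes). -/
noncomputable def tamariPoly (T : Tree0) : ℚ[X] :=
  ∑ S ∈ lowerTrees T, X ^ (leftDepth S + 1)

theorem eval_one_tamariPoly (T : Tree0) : (tamariPoly T).eval 1 = #(lowerTrees T) := by
  simp [tamariPoly, eval_finsetSum]

theorem tamariPoly_leaf : tamariPoly leaf = X := by
  have hleaf : lowerTrees leaf = {leaf} := by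
    ext S
    simp [tamariLE_leaf_iff]
  simp [tamariPoly, hleaf, leftDepth]

theorem tamariPoly_node_eq_sum (l r : Tree0) :
    tamariPoly (node l r) = ∑ a ∈ lowerTrees l, ∑ c ∈ lowerTrees r,
      ∑ s ∈ range (leftDepth c + 1), X ^ (leftDepth a + s + 2) := by
  simp_rw [tamariPoly, sum_sigma']
  symm
  refine sum_bij (fun z _ => insertAt z.2.2 z.1 z.2.1) ?_ ?_ ?_ ?_
  · rintro ⟨a, c, s⟩ hz
    simp only [mem_sigma, mem_lowerTrees, mem_range, Nat.lt_succ_iff] at hz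
    exact mem_lowerTrees.2 (tamariLE_node_iff.2 ⟨s, a, c, hz.2.2, rfl, hz.1, hz.2.1⟩)
  · rintro ⟨a, c, s⟩ hz ⟨a', c', s'⟩ hz' h
    simp only [mem_sigma, mem_lowerTrees, mem_range, Nat.lt_succ_iff] at hz hz'
    obtain ⟨rfl, rfl, rfl⟩ :=
      (insertAt_inj hz.2.2 hz'.2.2 (hz.1.size_eq.trans hz'.1.size_eq.symm)).1 h
    rfl
  · intro T hT
    obtain ⟨s, a, c, hs, rfl, ha, hc⟩ := tamariLE_node_iff.1 (mem_lowerTrees.1 hT)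
    refine ⟨⟨a, c, s⟩, ?_, rfl⟩
    simpa only [mem_sigma, mem_lowerTrees, mem_range, Nat.lt_succ_iff] using ⟨ha, hc, hs⟩
  · rintro ⟨a, c, s⟩ hz
    simp only [mem_sigma, mem_range, Nat.lt_succ_iff] at hz
    rw [leftDepth_insertAt hz.2.2]

theorem tamariPoly_sub_eval_one (T : Tree0) :
    tamariPoly T - C ((tamariPoly T).eval 1) =
      (X - 1) * ∑ S ∈ lowerTrees T, ∑ s ∈ range (leftDepth S + 1), X ^ s := by
  rw [mul_sum, eval_one_tamariPoly]
  simp [mul_geom_sum, tamariPoly]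

theorem tamariPoly_node (l r : Tree0) :
    (X - 1) * tamariPoly (node l r) =
      X * (tamariPoly l * (tamariPoly r - C ((tamariPoly r).eval 1))) := by
  have hfactor : tamariPoly (node l r) =
      X * (tamariPoly l * ∑ c ∈ lowerTrees r, ∑ s ∈ range (leftDepth c + 1), X ^ s) := by
    simp_rw [tamariPoly_node_eq_sum, tamariPoly, sum_mul_sum, mul_sum]
    refine sum_congr rfl fun a _ => sum_congr rfl fun c _ => sum_congr rfl fun s _ => ?_
    ring
  rw [hfactor, tamariPoly_sub_eval_one]
  ring

end TamariPolynomial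

end Tree0

namespace TamariInterval

open PowerSeries Tree0

section PowerSeries

variable {R S : Type*} [CommRing R] [CommRing S]

theorem hasSubst_X_mul (f : R⟦X⟧) : HasSubst (X * f) :=
  .of_constantCoeff_zero' (by simp)

-- `PowerSeries.map_subst` is stated with `MvPowerSeries.map`, which `rw` does not unfold.
theorem map_subst_powerSeries (f : R →+* S) {τ : R⟦X⟧} (hτ : HasSubst τ) (F : R⟦X⟧) :
    map f (F.subst τ) = (map f F).subst (map f τ) :=
  map_subst hτ F

theorem subst_injective {τ : R⟦X⟧} (hτ : constantCoeff τ = 0)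
    (hunit : IsUnit (coeff 1 τ)) : Function.Injective fun f : R⟦X⟧ => f.subst τ :=
  Function.LeftInverse.injective (g := PowerSeries.subst (τ.substInvOfIsUnit hunit)) fun f => by
    rw [subst_comp_subst_apply (.of_constantCoeff_zero' hτ) (.substInvOfIsUnit τ hunit),
      subst_substInvOfIsUnit_right τ hτ, X_subst]

theorem coeff_subst_mul {τ : R⟦X⟧} (hτ : X ∣ τ) (f g : R⟦X⟧) (N : ℕ) :
    coeff N (f.subst τ * g) =
      ∑ n ∈ Finset.range (N + 1), coeff n f * coeff N (τ ^ n * g) := by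
  have hsubst : HasSubst τ := .of_constantCoeff_zero' (X_dvd_iff.1 hτ)
  obtain ⟨r, hr⟩ : ∃ r, f.subst τ =
      τ ^ (N + 1) * r + ∑ n ∈ Finset.range (N + 1), C (coeff n f) * τ ^ n := by
    refine ⟨(mk fun i => coeff (i + (N + 1)) f).subst τ, ?_⟩
    nth_rw 1 [f.eq_X_pow_mul_shift_add_trunc (N + 1)]
    rw [subst_add hsubst, subst_mul hsubst, subst_pow hsubst, subst_X hsubst, subst_coe hsubst,
      Polynomial.aeval_def, eval₂_trunc_eq_sum_range]
    rfl
  have htail : coeff N (τ ^ (N + 1) * r * g) = 0 :=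
    X_pow_dvd_iff.1 (((pow_dvd_pow_of_dvd hτ _).mul_right r).mul_right g) N N.lt_succ_self
  rw [hr, add_mul, map_add, htail, zero_add, Finset.sum_mul, map_sum]
  simp_rw [mul_assoc, coeff_C_mul]

theorem X_pow_dvd_of_dvd_C_mul [NoZeroDivisors R] {a : R} (ha : a ≠ 0) {n : ℕ} {f : R⟦X⟧}
    (h : X ^ n ∣ C a * f) : X ^ n ∣ f := by
  rw [X_pow_dvd_iff] at h ⊢
  intro m hm
  simpa [ha] using h m hm

theorem coeff_one_sub_X_pow (m k : ℕ) :
    coeff k ((1 - X : R⟦X⟧) ^ m) = (-1) ^ k * m.choose k := by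
  have hrescale : (1 - X : R⟦X⟧) ^ m =
      rescale (-1) (((1 + Polynomial.X) ^ m : Polynomial R) : R⟦X⟧) := by
    simp [sub_eq_add_neg]
  rw [hrescale, coeff_rescale, Polynomial.coeff_coe, Polynomial.coeff_one_add_X_pow]

theorem coeff_X_pow_mul_one_sub_X_pow {n N : ℕ} (h : n ≤ N) (m : ℕ) :
    coeff N (X ^ n * (1 - X) ^ m : R⟦X⟧) = (-1) ^ (N - n) * m.choose (N - n) := by
  rw [coeff_X_pow_mul', if_pos h, coeff_one_sub_X_pow]

end PowerSeries

section CatalyticEquation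

variable {R : Type*} [CommRing R]

/-- The catalytic equation of Tamari intervals in the unknown power series `F`, with size variable
specialised to the power series `t` and catalytic variable `x`. The ring homomorphism `ε` stands
for the substitution of `1` for `x`. -/
def IsCatalyticSolution (ε : R →+* R) (x : R) (t F : R⟦X⟧) : Prop :=
  C (x - 1) * (F - C x) = C x * t * (F * (F - map ε F))

namespace IsCatalyticSolution

variable {ε : R →+* R} {x : R} {t F G : R⟦X⟧}

protected theorem subst {τ : R⟦X⟧} (hτ : HasSubst τ) (hετ : map ε τ = τ)
    (hF : IsCatalyticSolution ε x X F) : IsCatalyticSolution ε x τ (F.subst τ) := by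
  have hmap : map ε (F.subst τ) = (map ε F).subst τ := by
    rw [map_subst_powerSeries ε hτ, hετ]
  have hC (a : R) : substAlgHom hτ (C a) = C a := by
    rw [coe_substAlgHom]
    exact subst_C a
  rw [IsCatalyticSolution, hmap]
  simpa only [map_mul, map_sub, hC, substAlgHom_X, coe_substAlgHom]
    using congrArg (substAlgHom hτ) hF

theorem X_pow_dvd_sub [NoZeroDivisors R] (hx : x ≠ 1) (ht : X ∣ t)
    (hF : IsCatalyticSolution ε x t F) (hG : IsCatalyticSolution ε x t G) (n : ℕ) :
    X ^ n ∣ F - G := by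
  induction n with
  | zero => simp
  | succ n ih =>
    have hmap : X ^ n ∣ map ε (F - G) := by simpa using map_dvd (map ε) ih
    have hquad : X ^ n ∣ (F - G) * (F - map ε F) + G * ((F - G) - map ε (F - G)) :=
      dvd_add (ih.mul_right _) ((dvd_sub ih hmap).mul_left _)
    have hstep : C (x - 1) * (F - G) =
        C x * (t * ((F - G) * (F - map ε F) + G * ((F - G) - map ε (F - G)))) := by
      rw [IsCatalyticSolution] at hF hG
      rw [map_sub (map ε)]
      linear_combination hF - hG
    refine X_pow_dvd_of_dvd_C_mul (sub_ne_zero.2 hx) ?_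
    rw [hstep, pow_succ']
    exact (mul_dvd_mul ht hquad).mul_left _

protected theorem unique [NoZeroDivisors R] (hx : x ≠ 1) (ht : X ∣ t)
    (hF : IsCatalyticSolution ε x t F) (hG : IsCatalyticSolution ε x t G) : F = G := by
  ext n
  have hdvd := X_pow_dvd_iff.1 (hF.X_pow_dvd_sub hx ht hG (n + 1)) n n.lt_succ_self
  rwa [map_sub, sub_eq_zero] at hdvd

end IsCatalyticSolution

end CatalyticEquation

section Parametrization

variable {R S : Type*} [CommRing R] [CommRing S]

/-- The series `Cat(x z (1 - z))` in the variable `z`, where `Cat` is the Catalan series. -/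
noncomputable def catalanParam (x : R) : R⟦X⟧ :=
  (map (Nat.castRingHom R) catalanSeries).subst (X * (C x * (1 - X)))

theorem catalanParam_eq (x : R) :
    catalanParam x = 1 + C x * (X * (1 - X)) * catalanParam x ^ 2 := by
  have h := congrArg (substAlgHom (hasSubst_X_mul (C x * (1 - X))))
    (congrArg (map (Nat.castRingHom R)) catalanSeries_sq_mul_X_add_one)
  simp only [map_add, map_mul, map_pow, map_one, map_X, substAlgHom_X, coe_substAlgHom] at h
  rw [← catalanParam] at h
  linear_combination -h

theorem map_catalanParam (f : R →+* S) (x : R) :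
    map f (catalanParam x) = catalanParam (f x) := by
  have hcast : map f (map (Nat.castRingHom R) catalanSeries) =
      map (Nat.castRingHom S) catalanSeries := by
    ext n
    simp
  rw [catalanParam, map_subst_powerSeries f (hasSubst_X_mul _), hcast]
  simp [catalanParam]

theorem catalanParam_one : (catalanParam 1 : R⟦X⟧) = mk 1 := by
  have hunit : IsUnit (X * catalanParam 1 - 1 : R⟦X⟧) := isUnit_iff_constantCoeff.2 (by simp)
  have hfactor : (X * catalanParam 1 - 1 : R⟦X⟧) * ((1 - X) * catalanParam 1 - 1) = 0 := by
    have h := catalanParam_eq (1 : R)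
    rw [map_one] at h
    linear_combination -h
  have hinv := (hunit.mul_right_eq_zero).1 hfactor
  have hgeom := mk_one_mul_one_sub_eq_one R
  linear_combination mk 1 * hinv - catalanParam 1 * hgeom

/-- The generating function of Tamari intervals, refined by the catalytic variable `x` and
expressed in the parameter `z` such that the size variable is `z (1 - z) ^ 3`. -/
noncomputable def intervalParam (x : R) : R⟦X⟧ :=
  C x * catalanParam x * (1 - X * catalanParam x) * mk 1

theorem intervalParam_mul_one_sub (x : R) :
    intervalParam x * (1 - X) = C x * catalanParam x * (1 - X * catalanParam x) := by
  rw [intervalParam, mul_assoc, mk_one_mul_one_sub_eq_one, mul_one]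

theorem map_intervalParam (f : R →+* S) (x : R) :
    map f (intervalParam x) = intervalParam (f x) := by
  have hgeom : map f (mk 1) = mk 1 := by
    ext n
    simp
  simp [intervalParam, map_catalanParam, hgeom]

theorem intervalParam_one_mul_one_sub_pow :
    (intervalParam 1 : R⟦X⟧) * (1 - X) ^ 3 = 1 - 2 * X := by
  have hparam := intervalParam_mul_one_sub (1 : R)
  have hgeom := mk_one_mul_one_sub_eq_one R
  rw [catalanParam_one, map_one, one_mul] at hparam
  linear_combination (1 - X) ^ 2 * hparam + (1 - X - X * (mk 1 * (1 - X) + 1)) * hgeom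

theorem isCatalyticSolution_intervalParam {ε : R →+* R} {x : R} (hε : ε x = 1) :
    IsCatalyticSolution ε x (X * (1 - X) ^ 3) (intervalParam x) := by
  have hunit : IsUnit (1 - X : R⟦X⟧) := isUnit_iff_constantCoeff.2 (by simp)
  have hcat := catalanParam_eq x
  have hparam := intervalParam_mul_one_sub x
  have hone := intervalParam_one_mul_one_sub_pow (R := R)
  rw [IsCatalyticSolution, map_intervalParam, hε, map_sub, map_one]
  refine hunit.mul_left_cancel ?_
  generalize intervalParam x = g, (intervalParam 1 : R⟦X⟧) = g₁, catalanParam x = c at *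
  linear_combination (C x * (C x * (1 - X) * (1 - X * c) ^ 2 - (1 - X - X * c))) * hcat +
    (C x - 1 - C x * X * ((1 - X) ^ 2 * (g * (1 - X) + C x * c * (1 - X * c)) - g₁ * (1 - X) ^ 3)) *
      hparam + C x * X * (C x * c * (1 - X * c)) * hone

end Parametrization

section Chapoton

/-- Chapoton's number `2 (4n + 1)! / ((n + 1)! (3n + 2)!)`. -/
def chapoton (n : ℕ) : ℚ :=
  2 * (4 * n + 1).factorial / ((n + 1).factorial * (3 * n + 2).factorial)

theorem chapoton_mul_choose {n k : ℕ} (h : n ≤ k + 2) :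
    chapoton n * (3 * n + 3).choose (k + 2 - n) =
      6 / (k + 2).factorial * ((k + 2).choose n * (4 * n + 1).descFactorial k) := by
  by_cases hk : k ≤ 4 * n + 1
  · have hdesc : ((4 * n + 1).descFactorial k : ℚ) =
        (4 * n + 1).factorial / (4 * n + 1 - k).factorial := by
      rw [eq_div_iff (by positivity), mul_comm]
      exact_mod_cast Nat.factorial_mul_descFactorial hk
    rw [hdesc, chapoton, Nat.cast_choose ℚ h, Nat.cast_choose ℚ (by omega : k + 2 - n ≤ 3 * n + 3),
      show 3 * n + 3 - (k + 2 - n) = 4 * n + 1 - k by omega, Nat.factorial_succ n,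
      Nat.factorial_succ (3 * n + 2)]
    push_cast
    field_simp
    ring
  · have hzero : 4 * n + 1 < k := not_le.1 hk
    rw [Nat.choose_eq_zero_of_lt (by omega), Nat.descFactorial_eq_zero_iff_lt.2 hzero]
    simp

theorem sum_choose_mul_descFactorial {k m : ℕ} (h : k < m) (a b : ℕ) :
    ∑ n ∈ Finset.range (m + 1), (-1 : ℚ) ^ (m - n) *
      (m.choose n * (a * n + b).descFactorial k) = 0 := by
  have hdeg : ((descPochhammer ℚ k).comp
      (Polynomial.C (a : ℚ) * Polynomial.X + Polynomial.C (b : ℚ))).natDegree < m := by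
    calc _ ≤ k * 1 := Polynomial.natDegree_comp_le.trans (by
            rw [descPochhammer_natDegree]
            exact Nat.mul_le_mul_left k Polynomial.natDegree_linear_le)
      _ < m := by omega
  have hdiff := congrFun (Polynomial.fwdDiff_iter_eq_zero_of_degree_lt hdeg) 0
  rw [fwdDiff_iter_eq_sum_shift] at hdiff
  refine Eq.trans ?_ hdiff
  refine Finset.sum_congr rfl fun n _ => ?_
  rw [← descPochhammer_eval_eq_descFactorial]
  simp [Polynomial.eval_comp, mul_assoc]

theorem sum_chapoton_mul_choose (k : ℕ) :
    ∑ n ∈ Finset.range (k + 3),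
      chapoton n * ((-1) ^ (k + 2 - n) * (3 * n + 3).choose (k + 2 - n)) = 0 := by
  rw [← mul_zero (6 / ((k + 2).factorial : ℚ)),
    ← sum_choose_mul_descFactorial (by omega : k < k + 2) 4 1, Finset.mul_sum]
  refine Finset.sum_congr rfl fun n hn => ?_
  rw [mul_left_comm, chapoton_mul_choose (Nat.lt_succ_iff.1 (Finset.mem_range.1 hn)),
    mul_left_comm]

theorem subst_mk_chapoton_mul_one_sub_pow :
    (mk chapoton).subst (X * (1 - X) ^ 3 : ℚ⟦X⟧) * (1 - X) ^ 3 = 1 - 2 * X := by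
  ext N
  have hcoeff : ∀ n ∈ Finset.range (N + 1),
      coeff n (mk chapoton) * coeff N ((X * (1 - X) ^ 3 : ℚ⟦X⟧) ^ n * (1 - X) ^ 3) =
        chapoton n * ((-1) ^ (N - n) * (3 * n + 3).choose (N - n)) := fun n hn => by
    rw [mul_pow, ← pow_mul, mul_assoc, ← pow_add, coeff_mk,
      coeff_X_pow_mul_one_sub_X_pow (Nat.lt_succ_iff.1 (Finset.mem_range.1 hn))]
  rw [coeff_subst_mul (dvd_mul_right _ _), Finset.sum_congr rfl hcoeff,
    show (2 : ℚ⟦X⟧) = C 2 from rfl, map_sub, coeff_C_mul, coeff_one, coeff_X]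
  match N with
  | 0 => norm_num [chapoton, Nat.factorial]
  | 1 => norm_num [chapoton, Nat.factorial, Finset.sum_range_succ]
  | k + 2 => simpa using sum_chapoton_mul_choose k

end Chapoton

section GeneratingFunction

/-- The generating function `F(t; x)` of Tamari intervals, as a power series in the size variable
`t` whose coefficients are polynomials in the catalytic variable `x`. -/
noncomputable def intervalSeries : (Polynomial ℚ)⟦X⟧ :=
  mk fun n => ∑ T ∈ treesOfSize n, tamariPoly T

/-- The substitution `x = 1`, as an endomorphism of `ℚ[x]`. -/
noncomputable def evalOne : Polynomial ℚ →+* Polynomial ℚ :=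
  Polynomial.C.comp (Polynomial.evalRingHom 1)

theorem isCatalyticSolution_intervalSeries :
    IsCatalyticSolution evalOne Polynomial.X X intervalSeries := by
  rw [IsCatalyticSolution]
  ext1 n
  rw [mul_assoc, coeff_C_mul, coeff_C_mul, map_sub]
  cases n with
  | zero => simp [intervalSeries, treesOfSize_zero, tamariPoly_leaf]
  | succ n =>
    simp_rw [coeff_succ_C, sub_zero, coeff_succ_X_mul, coeff_mul, map_sub, coeff_map,
      intervalSeries, coeff_mk, sum_treesOfSize_succ, Finset.mul_sum, map_sum,
      ← Finset.sum_sub_distrib, Finset.sum_mul_sum, Finset.mul_sum]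
    exact Finset.sum_congr rfl fun ij _ => Finset.sum_congr rfl fun l _ =>
      Finset.sum_congr rfl fun r _ => tamariPoly_node l r

theorem subst_intervalSeries :
    intervalSeries.subst (X * (1 - X) ^ 3 : (Polynomial ℚ)⟦X⟧) = intervalParam Polynomial.X := by
  have hseries := isCatalyticSolution_intervalSeries.subst (hasSubst_X_mul ((1 - X) ^ 3)) (by simp)
  have hparam := isCatalyticSolution_intervalParam (ε := evalOne) (x := Polynomial.X)
    (by simp [evalOne])
  exact hseries.unique (Polynomial.X_ne_C 1) (dvd_mul_right _ _) hparam

theorem map_eval_one_intervalSeries :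
    map (Polynomial.evalRingHom 1) intervalSeries = mk chapoton := by
  have hunit : IsUnit ((1 - X : ℚ⟦X⟧) ^ 3) := (isUnit_iff_constantCoeff.2 (by simp)).pow 3
  have hsubst : (map (Polynomial.evalRingHom 1) intervalSeries).subst (X * (1 - X) ^ 3 : ℚ⟦X⟧) =
      intervalParam 1 := by
    have h := congrArg (map (Polynomial.evalRingHom 1)) subst_intervalSeries
    rw [map_subst_powerSeries _ (hasSubst_X_mul _), map_intervalParam] at h
    simpa using h
  refine subst_injective (τ := X * (1 - X) ^ 3) (by simp) (by simp [coeff_succ_X_mul]) ?_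
  refine hunit.mul_right_cancel ?_
  simp only [hsubst, subst_mk_chapoton_mul_one_sub_pow, intervalParam_one_mul_one_sub_pow]

theorem sum_card_lowerTrees (n : ℕ) :
    (∑ T ∈ treesOfSize n, (lowerTrees T).card : ℚ) = chapoton n := by
  have hcoeff := congrArg (coeff n) map_eval_one_intervalSeries
  simpa [intervalSeries, Polynomial.eval_finsetSum, eval_one_tamariPoly] using hcoeff

end GeneratingFunction

end TamariInterval

/-- Chapoton. The number of intervals in the Tamari lattice on binary
trees with `n` nodes equals `2(4n+1)! / ((n+1)!(3n+2)!)`. -/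
theorem tamari_interval_count (n : ℕ) :
    (Set.ncard {p : Tree0 × Tree0 |
        p.1.size = n ∧ p.2.size = n ∧ Tree0.tamariLE p.1 p.2}) *
      ((n + 1).factorial * (3 * n + 2).factorial)
      = 2 * (4 * n + 1).factorial := by
  have hcount := TamariInterval.sum_card_lowerTrees n
  rw [TamariInterval.chapoton, eq_div_iff (by positivity)] at hcount
  rw [Tree0.ncard_intervals]
  exact_mod_cast hcount
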